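/- Let L be a QDS generator on B(H) with Lindblad representation given by Hamiltonian H and noise operators {L_k}, and let ρ ∈ ker(L) be a density operator of maximal rank, i.e., supp(ρ) = supp(ker(L)). Let H̃ = supp(ρ), let Π : H̃ → H be the inclusion isometry, and let L̃ be the reduced QDS generator on B(H̃) with Hamiltonian Π† H Π and noise operators Π† L_k Π. Then ker(L) = ρ^{1/2} (ker(L̃†) ⊕ 0) ρ^{1/2}, where ker(L̃†) ⊕ 0 denotes the set of operators in ker(L̃†) extended by zero on the orthogonal complement of H̃. -/

import Mathlib

namespace QDS

open Matrix
open scoped ComplexOrder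

/-! ### Basic single-system notions -/

section Single

variable {ι : Type*} [Fintype ι] [DecidableEq ι]

open Classical in
/-- The (unique) positive-semidefinite square root of a positive-semidefinite matrix
(junk value `0` if no positive-semidefinite square root exists). -/
noncomputable def msqrt (A : Matrix ι ι ℂ) : Matrix ι ι ℂ :=
  if h : ∃ B : Matrix ι ι ℂ, B.PosSemidef ∧ B * B = A then h.choose else 0

open Classical in
/-- The Moore–Penrose pseudoinverse of a matrix, defined via its characterizing
properties (it always exists and is unique for complex matrices). -/
noncomputable def mpinv (A : Matrix ι ι ℂ) : Matrix ι ι ℂ :=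
  if h : ∃ B : Matrix ι ι ℂ,
      A * B * A = A ∧ B * A * B = B ∧ (A * B)ᴴ = A * B ∧ (B * A)ᴴ = B * A
  then h.choose else 0

/-- A density operator: positive semidefinite with unit trace. -/
def IsDensity (ρ : Matrix ι ι ℂ) : Prop := ρ.PosSemidef ∧ ρ.trace = 1

/-- A CPTP map in Kraus (operator-sum) form. -/
def IsCPTP (T : Matrix ι ι ℂ →ₗ[ℂ] Matrix ι ι ℂ) : Prop :=
  ∃ (m : ℕ) (M : Fin m → Matrix ι ι ℂ),
    (∀ X, T X = ∑ k, M k * X * (M k)ᴴ) ∧ (∑ k, (M k)ᴴ * M k) = 1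

/-- The Lindblad (QDS) generator with Hamiltonian `Hm` and noise operators `Lk`:
`L(X) = -i[Hm, X] + Σₖ (Lₖ X Lₖ† - ½{Lₖ†Lₖ, X})`. -/
noncomputable def lindbladMap (Hm : Matrix ι ι ℂ) {m : ℕ} (Lk : Fin m → Matrix ι ι ℂ) :
    Matrix ι ι ℂ →ₗ[ℂ] Matrix ι ι ℂ :=
  (-Complex.I) • (LinearMap.mulLeft ℂ Hm - LinearMap.mulRight ℂ Hm) +
    ∑ k, ((LinearMap.mulRight ℂ (Lk k)ᴴ).comp (LinearMap.mulLeft ℂ (Lk k)) -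
      ((1 : ℂ)/2) • (LinearMap.mulLeft ℂ ((Lk k)ᴴ * Lk k) +
        LinearMap.mulRight ℂ ((Lk k)ᴴ * Lk k)))

/-- `L` is a QDS (Lindblad) generator. -/
def IsLindblad (L : Matrix ι ι ℂ →ₗ[ℂ] Matrix ι ι ℂ) : Prop :=
  ∃ Hm : Matrix ι ι ℂ, Hm.IsHermitian ∧
    ∃ (m : ℕ) (Lk : Fin m → Matrix ι ι ℂ), L = lindbladMap Hm Lk

/-- `Ld` is the Hilbert–Schmidt adjoint of `L` (w.r.t. `⟨X,Y⟩ = Tr(X†Y)`). -/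
def IsHSAdjoint (L Ld : Matrix ι ι ℂ →ₗ[ℂ] Matrix ι ι ℂ) : Prop :=
  ∀ X Y : Matrix ι ι ℂ, ((Ld X)ᴴ * Y).trace = (Xᴴ * L Y).trace

/-- The fixed-point set of a (super)operator. -/
def fixSet (T : Matrix ι ι ℂ →ₗ[ℂ] Matrix ι ι ℂ) : Set (Matrix ι ι ℂ) := {X | T X = X}

/-- The support of an operator: the orthogonal complement of its kernel,
equivalently the range of its adjoint. -/
noncomputable def msupp (A : Matrix ι ι ℂ) : Submodule ℂ (ι → ℂ) := LinearMap.range (Aᴴ).mulVecLin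

/-- The support of a set of operators: the span of the union of their supports. -/
noncomputable def suppSet (W : Set (Matrix ι ι ℂ)) : Submodule ℂ (ι → ℂ) := ⨆ O ∈ W, msupp O

/-- The minimal modular-invariant distorted algebra generated by `W` relative to `ρ`:
the smallest subspace containing `W` that is closed under the adjoint, under the
`ρ`-modified product `(X,Y) ↦ X ρ⁻ Y`, and under the modular map `X ↦ ρ^{1/2} X ρ⁻^{1/2}`. -/
noncomputable def Fdist (ρ : Matrix ι ι ℂ) (W : Set (Matrix ι ι ℂ)) :
    Submodule ℂ (Matrix ι ι ℂ) :=
  sInf {S : Submodule ℂ (Matrix ι ι ℂ) | W ⊆ S ∧ (∀ X ∈ S, Xᴴ ∈ S) ∧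
    (∀ X ∈ S, ∀ Y ∈ S, X * mpinv ρ * Y ∈ S) ∧
    (∀ X ∈ S, msqrt ρ * X * mpinv (msqrt ρ) ∈ S)}

/-- `ρ` is globally asymptotically stable for the generator `L`: it is invariant and every
solution of `ẋ = L(x)` starting at a density operator converges to `ρ` as `t → ∞`. -/
def IsGAS (L : Matrix ι ι ℂ →ₗ[ℂ] Matrix ι ι ℂ) (ρ : Matrix ι ι ℂ) : Prop :=
  L ρ = 0 ∧
  ∀ σ : Matrix ι ι ℂ, IsDensity σ →
    ∀ x : ℝ → Matrix ι ι ℂ, x 0 = σ →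
      (∀ t : ℝ, ∀ i j, HasDerivAt (fun s : ℝ => x s i j) (L (x t) i j) t) →
      ∀ i j, Filter.Tendsto (fun t : ℝ => x t i j) Filter.atTop (nhds (ρ i j))

end Single

/-! ### Bipartite notions -/

section Bipartite

variable {α β : Type*} [Fintype α] [Fintype β] [DecidableEq α] [DecidableEq β]

/-- Partial trace over the second factor. -/
noncomputable def ptraceB (ρ : Matrix (α × β) (α × β) ℂ) : Matrix α α ℂ :=
  Matrix.of fun i j => ∑ k : β, ρ (i, k) (j, k)

/-- The operator Schmidt span of `ρ` on the first factor:
`{Tr_B[(I ⊗ B) ρ] : B ∈ B(H_B)}`. -/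
noncomputable def opSchmidtA (ρ : Matrix (α × β) (α × β) ℂ) : Set (Matrix α α ℂ) :=
  {A | ∃ B : Matrix β β ℂ,
    A = ptraceB ((Matrix.kroneckerMap (· * ·) (1 : Matrix α α ℂ) B) * ρ)}

/-- The (vector) Schmidt span of `v ∈ V_A ⊗ V_B` relative to `V_A`: the image of `v`
under partial inner products with vectors of `V_B`. -/
def vSchmidtA (v : α × β → ℂ) : Set (α → ℂ) :=
  {w | ∃ b : β → ℂ, w = fun a => ∑ j, (starRingEnd ℂ) (b j) * v (a, j)}

/-- `Σ_A(v) ⊗ V_B` as a subspace of `V_A ⊗ V_B`. -/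
noncomputable def extVSchmidtA (v : α × β → ℂ) : Submodule ℂ (α × β → ℂ) :=
  Submodule.span ℂ {v' | ∃ w ∈ vSchmidtA v, ∃ b : β → ℂ, v' = fun p => w p.1 * b p.2}

end Bipartite

/-! ### Multipartite notions -/

section Multipartite

variable {n : ℕ} {d : Fin n → Type*} [∀ a, Fintype (d a)] [∀ a, DecidableEq (d a)]

/-- Index type of the neighborhood factor `H_N`. -/
abbrev nbhdIdx (d : Fin n → Type*) (N : Finset (Fin n)) : Type _ :=
  ∀ a : {x : Fin n // x ∈ N}, d a

/-- Index type of the complementary factor `H_N̄`. -/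
abbrev nbhdCoIdx (d : Fin n → Type*) (N : Finset (Fin n)) : Type _ :=
  ∀ a : {x : Fin n // ¬ x ∈ N}, d a

/-- The factorization `H ≃ H_N ⊗ H_N̄` at the level of index types. -/
def splitEquiv (d : Fin n → Type*) (N : Finset (Fin n)) :
    (∀ a, d a) ≃ nbhdIdx d N × nbhdCoIdx d N :=
  Equiv.piEquivPiSubtypeProd (fun x => x ∈ N) d

variable (d)

/-- The operator `A ⊗ B` on `H = H_N ⊗ H_N̄`, viewed as an operator on `H`. -/
noncomputable def splitLift (N : Finset (Fin n))
    (A : Matrix (nbhdIdx d N) (nbhdIdx d N) ℂ)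
    (B : Matrix (nbhdCoIdx d N) (nbhdCoIdx d N) ℂ) :
    Matrix (∀ a, d a) (∀ a, d a) ℂ :=
  (Matrix.kroneckerMap (· * ·) A B).submatrix (splitEquiv d N) (splitEquiv d N)

/-- The neighborhood operator `A ⊗ I_N̄` on `H`. -/
noncomputable def nbhdLift (N : Finset (Fin n))
    (A : Matrix (nbhdIdx d N) (nbhdIdx d N) ℂ) : Matrix (∀ a, d a) (∀ a, d a) ℂ :=
  splitLift d N A 1

/-- The operator `I_N ⊗ B` on `H`. -/
noncomputable def coLift (N : Finset (Fin n))
    (B : Matrix (nbhdCoIdx d N) (nbhdCoIdx d N) ℂ) : Matrix (∀ a, d a) (∀ a, d a) ℂ :=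
  splitLift d N 1 B

/-- The reduced state `ρ_N = Tr_N̄(ρ)` on the neighborhood `N`. -/
noncomputable def nbhdPtrace (N : Finset (Fin n)) (ρ : Matrix (∀ a, d a) (∀ a, d a) ℂ) :
    Matrix (nbhdIdx d N) (nbhdIdx d N) ℂ :=
  Matrix.of fun i j => ∑ k : nbhdCoIdx d N,
    ρ ((splitEquiv d N).symm (i, k)) ((splitEquiv d N).symm (j, k))

/-- The operator Schmidt span of `ρ` on the neighborhood `N`:
`Σ_N(ρ) = {Tr_N̄[(I_N ⊗ B) ρ] : B}`. -/
noncomputable def nbhdSchmidt (N : Finset (Fin n)) (ρ : Matrix (∀ a, d a) (∀ a, d a) ℂ) :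
    Set (Matrix (nbhdIdx d N) (nbhdIdx d N) ℂ) :=
  {A | ∃ B : Matrix (nbhdCoIdx d N) (nbhdCoIdx d N) ℂ,
    A = nbhdPtrace d N (coLift d N B * ρ)}

/-- The extended minimal modular-invariant distorted algebra
`F_{ρ_N}(Σ_N(ρ)) ⊗ B(H_N̄)` as a subspace of `B(H)`. -/
noncomputable def extF (N : Finset (Fin n)) (ρ : Matrix (∀ a, d a) (∀ a, d a) ℂ) :
    Submodule ℂ (Matrix (∀ a, d a) (∀ a, d a) ℂ) :=
  Submodule.span ℂ {X | ∃ A ∈ Fdist (nbhdPtrace d N ρ) (nbhdSchmidt d N ρ),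
    ∃ B : Matrix (nbhdCoIdx d N) (nbhdCoIdx d N) ℂ, X = splitLift d N A B}

/-- A neighborhood QDS generator for `N`: a Lindblad generator whose Hamiltonian and
noise operators all act as `X_N ⊗ I_N̄`. -/
def IsNbhdGen (N : Finset (Fin n))
    (L : Matrix (∀ a, d a) (∀ a, d a) ℂ →ₗ[ℂ] Matrix (∀ a, d a) (∀ a, d a) ℂ) : Prop :=
  ∃ HN : Matrix (nbhdIdx d N) (nbhdIdx d N) ℂ, HN.IsHermitian ∧
    ∃ (m : ℕ) (Lk : Fin m → Matrix (nbhdIdx d N) (nbhdIdx d N) ℂ),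
      L = lindbladMap (nbhdLift d N HN) fun k => nbhdLift d N (Lk k)

/-- A purely dissipative neighborhood generator for `N` (zero Hamiltonian in some
Lindblad representation). -/
def IsDissipNbhdGen (N : Finset (Fin n))
    (L : Matrix (∀ a, d a) (∀ a, d a) ℂ →ₗ[ℂ] Matrix (∀ a, d a) (∀ a, d a) ℂ) : Prop :=
  ∃ (m : ℕ) (Lk : Fin m → Matrix (nbhdIdx d N) (nbhdIdx d N) ℂ),
    L = lindbladMap 0 fun k => nbhdLift d N (Lk k)

/-- The family of neighborhood generators `Lj` is frustration free: every invariant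
state of the sum is invariant for each component. -/
def IsFFFamily {M : ℕ}
    (Lj : Fin M → (Matrix (∀ a, d a) (∀ a, d a) ℂ →ₗ[ℂ] Matrix (∀ a, d a) (∀ a, d a) ℂ)) :
    Prop :=
  ∀ ρ : Matrix (∀ a, d a) (∀ a, d a) ℂ, IsDensity ρ → (∑ j, Lj j) ρ = 0 → ∀ j, Lj j ρ = 0

/-- `ρ` is frustration-free quasi-locally stabilizable relative to the neighborhood
structure `Nb`. -/
def IsFFQLS {M : ℕ} (Nb : Fin M → Finset (Fin n))
    (ρ : Matrix (∀ a, d a) (∀ a, d a) ℂ) : Prop :=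
  ∃ Lj : Fin M → (Matrix (∀ a, d a) (∀ a, d a) ℂ →ₗ[ℂ] Matrix (∀ a, d a) (∀ a, d a) ℂ),
    (∀ j, IsNbhdGen d (Nb j) (Lj j)) ∧ IsFFFamily d Lj ∧ IsGAS (∑ j, Lj j) ρ

/-- A pure state `|ψ⟩⟨ψ|` is dissipatively quasi-locally stabilizable relative to `Nb`:
it is GAS for a QL generator whose components have zero Hamiltonian and neighborhood
noise operators annihilating `ψ`. -/
def IsDQLS {M : ℕ} (Nb : Fin M → Finset (Fin n)) (ψ : (∀ a, d a) → ℂ) : Prop :=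
  ∃ Lj : Fin M → (Matrix (∀ a, d a) (∀ a, d a) ℂ →ₗ[ℂ] Matrix (∀ a, d a) (∀ a, d a) ℂ),
    (∀ j, ∃ (m : ℕ) (Dk : Fin m → Matrix (nbhdIdx d (Nb j)) (nbhdIdx d (Nb j)) ℂ),
      Lj j = lindbladMap 0 (fun k => nbhdLift d (Nb j) (Dk k)) ∧
      ∀ k, (nbhdLift d (Nb j) (Dk k)).mulVec ψ = 0) ∧
    IsGAS (∑ j, Lj j) (Matrix.vecMulVec ψ (star ψ))

/-- The (vector) Schmidt span of `ψ` relative to the neighborhood factor `H_N`. -/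
def vecSchmidt (N : Finset (Fin n)) (ψ : (∀ a, d a) → ℂ) : Set (nbhdIdx d N → ℂ) :=
  {w | ∃ b : nbhdCoIdx d N → ℂ,
    w = fun i => ∑ k, (starRingEnd ℂ) (b k) * ψ ((splitEquiv d N).symm (i, k))}

/-- `Σ_N(ψ) ⊗ H_N̄` as a subspace of `H`. -/
noncomputable def extVecSchmidt (N : Finset (Fin n)) (ψ : (∀ a, d a) → ℂ) :
    Submodule ℂ ((∀ a, d a) → ℂ) :=
  Submodule.span ℂ {v | ∃ w ∈ vecSchmidt d N ψ, ∃ b : nbhdCoIdx d N → ℂ,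
    v = fun x => w ((splitEquiv d N) x).1 * b ((splitEquiv d N) x).2}

end Multipartite

section Helpers

variable {ι : Type*} [Fintype ι] [DecidableEq ι]

/-- Effective (non-Hermitian) generator. -/
noncomputable def effG (Hm : Matrix ι ι ℂ) {m : ℕ} (Lk : Fin m → Matrix ι ι ℂ) : Matrix ι ι ℂ :=
  (-Complex.I) • Hm - ((1 : ℂ)/2) • ∑ k, (Lk k)ᴴ * Lk k

lemma effG_add (Hm : Matrix ι ι ℂ) (hH : Hm.IsHermitian) {m : ℕ} (Lk : Fin m → Matrix ι ι ℂ) :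
    effG Hm Lk + (effG Hm Lk)ᴴ = - ∑ k, (Lk k)ᴴ * Lk k := by
  have h1 : (∑ k, (Lk k)ᴴ * Lk k)ᴴ = ∑ k, (Lk k)ᴴ * Lk k := by
    simp [Matrix.conjTranspose_sum, Matrix.conjTranspose_mul]
  simp only [effG, Matrix.conjTranspose_sub, Matrix.conjTranspose_smul, h1, hH.eq]
  have e1 : star (-Complex.I) = Complex.I := by simp
  have e2 : star ((1:ℂ)/2) = 1/2 := by simp
  rw [e1, e2]
  module

lemma lindblad_eq (Hm : Matrix ι ι ℂ) (hH : Hm.IsHermitian) {m : ℕ} (Lk : Fin m → Matrix ι ι ℂ)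
    (X : Matrix ι ι ℂ) :
    lindbladMap Hm Lk X =
      effG Hm Lk * X + X * (effG Hm Lk)ᴴ + ∑ k, Lk k * X * (Lk k)ᴴ := by
  have h1 : (∑ k, (Lk k)ᴴ * Lk k)ᴴ = ∑ k, (Lk k)ᴴ * Lk k := by
    simp [Matrix.conjTranspose_sum, Matrix.conjTranspose_mul]
  have e1 : star (-Complex.I) = Complex.I := by simp
  have e2 : star ((1:ℂ)/2) = 1/2 := by simp
  simp only [effG, Matrix.conjTranspose_sub, Matrix.conjTranspose_smul, h1, hH.eq, e1, e2]
  simp only [lindbladMap, LinearMap.add_apply, LinearMap.smul_apply, LinearMap.sub_apply,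
    LinearMap.sum_apply, LinearMap.mulLeft_apply, LinearMap.mulRight_apply, LinearMap.comp_apply,
    Finset.sum_sub_distrib, ← Finset.smul_sum, Finset.sum_add_distrib, ← Finset.sum_mul,
    ← Finset.mul_sum, Matrix.sub_mul, Matrix.mul_sub, Matrix.smul_mul, Matrix.mul_smul]
  module

lemma trace_nondeg (Z : Matrix ι ι ℂ) (h : ∀ Y : Matrix ι ι ℂ, (Z * Y).trace = 0) : Z = 0 := by
  have := h Zᴴ
  exact Matrix.trace_mul_conjTranspose_self_eq_zero_iff.1 this

lemma sum_mul_conj_zero {κ : Type*} [Fintype κ] {m : ℕ} (A : Fin m → Matrix κ ι ℂ)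
    (h : ∑ k, A k * (A k)ᴴ = 0) (k : Fin m) : A k = 0 := by
  have h2 : ∑ k, (A k * (A k)ᴴ).trace = 0 := by rw [← Matrix.trace_sum, h, Matrix.trace_zero]
  have h3 := (Finset.sum_eq_zero_iff_of_nonneg (fun k _ =>
    (Matrix.posSemidef_self_mul_conjTranspose (A k)).trace_nonneg)).1 h2 k (Finset.mem_univ k)
  exact Matrix.trace_mul_conjTranspose_self_eq_zero_iff.1 h3

lemma adj_eq (Hm : Matrix ι ι ℂ) (hH : Hm.IsHermitian) {m : ℕ} (Lk : Fin m → Matrix ι ι ℂ)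
    (Ld : Matrix ι ι ℂ →ₗ[ℂ] Matrix ι ι ℂ) (hadj : IsHSAdjoint (lindbladMap Hm Lk) Ld)
    (X : Matrix ι ι ℂ) :
    Ld X = (effG Hm Lk)ᴴ * X + X * effG Hm Lk + ∑ k, (Lk k)ᴴ * X * Lk k := by
  rw [← sub_eq_zero, ← Matrix.conjTranspose_eq_zero]
  apply trace_nondeg
  intro Y
  rw [Matrix.conjTranspose_sub, Matrix.sub_mul, Matrix.trace_sub, hadj, lindblad_eq _ hH, sub_eq_zero]
  simp only [Matrix.conjTranspose_add, Matrix.conjTranspose_mul, Matrix.conjTranspose_conjTranspose,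
    Matrix.conjTranspose_sum, Matrix.add_mul, Matrix.mul_add, Matrix.trace_add, Finset.sum_mul,
    Finset.mul_sum, Matrix.trace_sum]
  congr 1
  · rw [add_comm, add_comm (Matrix.trace _)]
    congr 1
    · rw [← Matrix.mul_assoc, Matrix.trace_mul_comm]
    · rw [Matrix.mul_assoc, Matrix.trace_mul_comm _ (Xᴴ * Y), Matrix.mul_assoc]
  · refine Finset.sum_congr rfl fun k _ => ?_
    rw [← Matrix.mul_assoc, ← Matrix.mul_assoc, Matrix.trace_mul_comm]
    simp only [Matrix.mul_assoc]

lemma comm_of_ker {m : ℕ} (G : Matrix ι ι ℂ) (Lk : Fin m → Matrix ι ι ℂ)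
    (hG : G + Gᴴ = - ∑ k, (Lk k)ᴴ * Lk k) (ρ : Matrix ι ι ℂ) (hρ : ρ.PosDef)
    (s : Matrix ι ι ℂ) (hs : s.PosDef) (hss : s * s = ρ)
    (hfix : G * ρ + ρ * Gᴴ + ∑ k, Lk k * ρ * (Lk k)ᴴ = 0)
    (X : Matrix ι ι ℂ) (hX : Gᴴ * X + X * G + ∑ k, (Lk k)ᴴ * X * Lk k = 0)
    (hX' : Gᴴ * Xᴴ + Xᴴ * G + ∑ k, (Lk k)ᴴ * Xᴴ * Lk k = 0) (k : Fin m) :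
    X * Lk k = Lk k * X := by
  have key : Gᴴ * (Xᴴ * X) + (Xᴴ * X) * G + ∑ k, (Lk k)ᴴ * (Xᴴ * X) * Lk k
      = ∑ k, (X * Lk k - Lk k * X)ᴴ * (X * Lk k - Lk k * X) := by
    have e1 : ∑ k, (X * Lk k - Lk k * X)ᴴ * (X * Lk k - Lk k * X) =
        ∑ k, (Lk k)ᴴ * (Xᴴ * X) * Lk k + Xᴴ * (∑ k, (Lk k)ᴴ * Lk k) * X
          - Xᴴ * (∑ k, (Lk k)ᴴ * X * Lk k) - (∑ k, (Lk k)ᴴ * Xᴴ * Lk k) * X := by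
      simp only [Finset.mul_sum, Finset.sum_mul, ← Finset.sum_add_distrib,
        ← Finset.sum_sub_distrib]
      refine Finset.sum_congr rfl fun k _ => ?_
      simp only [Matrix.conjTranspose_sub, Matrix.conjTranspose_mul]
      noncomm_ring
    have e2 : ∑ k, (Lk k)ᴴ * Lk k = -(G + Gᴴ) := by rw [hG, neg_neg]
    have e3 : ∑ k, (Lk k)ᴴ * X * Lk k = -(Gᴴ * X + X * G) := by
      rw [eq_neg_iff_add_eq_zero, add_comm]; exact hX
    have e4 : ∑ k, (Lk k)ᴴ * Xᴴ * Lk k = -(Gᴴ * Xᴴ + Xᴴ * G) := by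
      rw [eq_neg_iff_add_eq_zero, add_comm]; exact hX'
    rw [e1, e2, e3, e4]
    noncomm_ring
  have t0 : (ρ * (Gᴴ * (Xᴴ * X) + (Xᴴ * X) * G + ∑ k, (Lk k)ᴴ * (Xᴴ * X) * Lk k)).trace = 0 := by
    have : ((G * ρ + ρ * Gᴴ + ∑ k, Lk k * ρ * (Lk k)ᴴ) * (Xᴴ * X)).trace = 0 := by
      rw [hfix]; simp
    rw [← this]
    simp only [Matrix.add_mul, Matrix.mul_add, Matrix.trace_add, Finset.sum_mul,
      Finset.mul_sum, Matrix.trace_sum]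
    congr 1
    · rw [add_comm]
      congr 1
      · rw [← Matrix.mul_assoc, Matrix.trace_mul_comm, ← Matrix.mul_assoc]
      · rw [Matrix.mul_assoc]
    · refine Finset.sum_congr rfl fun k _ => ?_
      rw [← Matrix.mul_assoc, Matrix.trace_mul_comm]
      simp only [Matrix.mul_assoc]
  rw [key] at t0
  set C := fun k => X * Lk k - Lk k * X with hC
  have t1 : ∑ k, ((C k * s)ᴴ * (C k * s)).trace = 0 := by
    rw [← t0, Finset.mul_sum, Matrix.trace_sum]
    refine Finset.sum_congr rfl fun k _ => ?_
    rw [Matrix.conjTranspose_mul, hs.1.eq, ← hss, Matrix.mul_assoc s s, Matrix.trace_mul_comm s]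
    rw [Matrix.mul_assoc, Matrix.mul_assoc s, Matrix.mul_assoc]
  have t2 := (Finset.sum_eq_zero_iff_of_nonneg (fun k _ =>
    (Matrix.posSemidef_conjTranspose_mul_self (C k * s)).trace_nonneg)).1 t1 k (Finset.mem_univ k)
  have t3 := Matrix.trace_conjTranspose_mul_self_eq_zero_iff.1 t2
  have t4 : C k = 0 := by
    have hu := hs.isUnit
    exact (hu.mul_left_eq_zero).1 t3
  exact sub_eq_zero.1 t4

lemma sqrt_invariant (A : Submodule ℂ (Matrix ι ι ℂ)) (s : Matrix ι ι ℂ) (hs : s.PosDef)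
    (hA : ∀ X ∈ A, (s * s) * X * (s⁻¹ * s⁻¹) ∈ A) (X : Matrix ι ι ℂ) (hX : X ∈ A) :
    s * X * s⁻¹ ∈ A := by
  let U : Matrix ι ι ℂ := hs.1.eigenvectorUnitary
  let d : ι → ℝ := hs.1.eigenvalues
  have hd : ∀ i, 0 < d i := hs.eigenvalues_pos
  have hUU : Uᴴ * U = 1 := Unitary.coe_star_mul_self hs.1.eigenvectorUnitary
  have hUU' : U * Uᴴ = 1 := Unitary.coe_mul_star_self hs.1.eigenvectorUnitary
  let Λ : Matrix ι ι ℂ := Matrix.diagonal (fun i => (d i : ℂ))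
  let Λi : Matrix ι ι ℂ := Matrix.diagonal (fun i => ((d i : ℂ))⁻¹)
  have hs1 : s = U * Λ * Uᴴ := by
    have := hs.1.spectral_theorem
    rw [Unitary.conjStarAlgAut_apply] at this
    exact this
  have hsi : s⁻¹ = U * Λi * Uᴴ := by
    apply Matrix.inv_eq_right_inv
    have hl : Λ * Λi = 1 := by
      rw [Matrix.diagonal_mul_diagonal, ← Matrix.diagonal_one]
      congr 1; ext i
      exact mul_inv_cancel₀ (by exact_mod_cast (hd i).ne')
    calc s * (U * Λi * Uᴴ) = U * Λ * (Uᴴ * U) * Λi * Uᴴ := by rw [hs1]; noncomm_ring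
      _ = U * (Λ * Λi) * Uᴴ := by rw [hUU]; noncomm_ring
      _ = 1 := by rw [hl, Matrix.mul_one, hUU']
  let f : Module.End ℂ (Matrix ι ι ℂ) :=
    (LinearMap.mulRight ℂ s⁻¹).comp (LinearMap.mulLeft ℂ s)
  have hf : ∀ Z, f Z = s * Z * s⁻¹ := fun Z => rfl
  let p : Polynomial ℂ := Lagrange.interpolate
    (Finset.univ.image (fun ij : ι × ι => ((d ij.1 / d ij.2 : ℝ) : ℂ) ^ 2)) id
    (fun r => ((Real.sqrt r.re : ℝ) : ℂ))
  have hp : ∀ i j, p.eval (((d i / d j : ℝ) : ℂ) ^ 2) = ((d i / d j : ℝ) : ℂ) := by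
    intro i j
    have := Lagrange.eval_interpolate_at_node
      (s := Finset.univ.image (fun ij : ι × ι => ((d ij.1 / d ij.2 : ℝ) : ℂ) ^ 2)) (v := id)
      (fun r => ((Real.sqrt r.re : ℝ) : ℂ)) (i := ((d i / d j : ℝ) : ℂ) ^ 2)
      (Function.injective_id.injOn) (Finset.mem_image.2 ⟨(i, j), Finset.mem_univ _, rfl⟩)
    rw [id] at this
    rw [this]
    congr 1
    rw [← Complex.ofReal_pow, Complex.ofReal_re, Real.sqrt_sq (div_pos (hd i) (hd j)).le]
  have hfE : ∀ i j, f (U * Matrix.single i j 1 * Uᴴ) =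
      ((d i / d j : ℝ) : ℂ) • (U * Matrix.single i j 1 * Uᴴ) := by
    intro i j
    have h0 : Λ * Matrix.single i j (1:ℂ) * Λi = ((d i / d j : ℝ) : ℂ) • Matrix.single i j 1 := by
      ext a b
      rw [Matrix.mul_diagonal, Matrix.diagonal_mul, Matrix.smul_apply, Matrix.single_apply]
      split_ifs with h
      · obtain ⟨rfl, rfl⟩ := h
        simp [div_eq_mul_inv]
      · simp
    rw [hf, hsi, hs1]
    calc _ = U * Λ * (Uᴴ * U) * Matrix.single i j 1 * (Uᴴ * U) * Λi * Uᴴ := by noncomm_ring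
      _ = U * (Λ * Matrix.single i j 1 * Λi) * Uᴴ := by rw [hUU]; noncomm_ring
      _ = _ := by rw [h0, Matrix.mul_smul, Matrix.smul_mul]
  have hpow : ∀ (n : ℕ) i j, ((f ^ 2) ^ n) (U * Matrix.single i j 1 * Uᴴ) =
      ((((d i / d j : ℝ) : ℂ) ^ 2) ^ n) • (U * Matrix.single i j 1 * Uᴴ) := by
    intro n i j
    induction n with
    | zero => simp
    | succ n ih =>
      rw [pow_succ', Module.End.mul_apply, ih, map_smul, pow_two f, Module.End.mul_apply, hfE,
        map_smul, hfE, smul_smul, smul_smul]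
      congr 1; ring
  have haev : ∀ (q : Polynomial ℂ) i j, (Polynomial.aeval (f ^ 2) q) (U * Matrix.single i j 1 * Uᴴ) =
      (q.eval (((d i / d j : ℝ) : ℂ) ^ 2)) • (U * Matrix.single i j 1 * Uᴴ) := by
    intro q i j
    induction q using Polynomial.induction_on' with
    | add a b ha hb => rw [map_add, LinearMap.add_apply, ha, hb, Polynomial.eval_add, add_smul]
    | monomial n c =>
      rw [Polynomial.aeval_monomial, Module.End.mul_apply, hpow, Polynomial.eval_monomial, mul_smul]
      rfl
  have hall : ∀ Z : Matrix ι ι ℂ,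
      (Polynomial.aeval (f ^ 2) p) (U * Z * Uᴴ) = f (U * Z * Uᴴ) := by
    intro Z
    induction Z using Matrix.induction_on' with
    | h_zero => simp
    | h_add a b ha hb => rw [Matrix.mul_add, Matrix.add_mul, map_add, map_add, ha, hb]
    | h_std_basis i j x =>
      have : Matrix.single i j x = x • Matrix.single i j (1:ℂ) := by simp
      rw [this, Matrix.mul_smul, Matrix.smul_mul, map_smul, map_smul, haev, hp, hfE]
  have hXU : X = U * (Uᴴ * X * U) * Uᴴ := by
    calc X = (U * Uᴴ) * X * (U * Uᴴ) := by rw [hUU']; simp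
      _ = _ := by noncomm_ring
  have hinv : ∀ Z ∈ A, (f ^ 2) Z ∈ A := by
    intro Z hZ
    have := hA Z hZ
    rw [pow_two, Module.End.mul_apply, hf, hf]
    convert this using 1
    noncomm_ring
  have hinvp : ∀ (q : Polynomial ℂ) (Z), Z ∈ A → (Polynomial.aeval (f ^ 2) q) Z ∈ A := by
    intro q Z hZ
    induction q using Polynomial.induction_on' with
    | add a b ha hb => rw [map_add, LinearMap.add_apply]; exact A.add_mem ha hb
    | monomial n c =>
      rw [Polynomial.aeval_monomial, Module.End.mul_apply]
      apply A.smul_mem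
      induction n with
      | zero => simpa using hZ
      | succ n ih => rw [pow_succ', Module.End.mul_apply]; exact hinv _ ih
  have := hinvp p X hX
  rw [hXU, hall, ← hXU] at this
  exact this

lemma finrank_ker_adj (L M : Matrix ι ι ℂ →ₗ[ℂ] Matrix ι ι ℂ)
    (h : ∀ X Y : Matrix ι ι ℂ, (M X * Y).trace = (X * L Y).trace) :
    Module.finrank ℂ (LinearMap.ker L) = Module.finrank ℂ (LinearMap.ker M) := by
  let e : Matrix ι ι ℂ →ₗ[ℂ] Module.Dual ℂ (Matrix ι ι ℂ) :=
    (LinearMap.mul ℂ (Matrix ι ι ℂ)).compr₂ (Matrix.traceLinearMap ι ℂ ℂ)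
  have he : ∀ X Y, e X Y = (X * Y).trace := fun X Y => rfl
  have hinj : Function.Injective e := by
    rw [injective_iff_map_eq_zero]
    intro X hX
    exact trace_nondeg X fun Y => by rw [← he, hX]; rfl
  let E := LinearEquiv.ofInjectiveOfFinrankEq e hinj (Subspace.dual_finrank_eq).symm
  have hE : ∀ X, E X = e X := fun X => rfl
  have hc : L.dualMap.comp e = e.comp M := by
    apply LinearMap.ext
    intro X
    apply LinearMap.ext
    intro Y
    simp only [LinearMap.comp_apply, LinearMap.dualMap_apply, he, h]
  have hsurj : Function.Surjective e := E.surjective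
  have r1 : LinearMap.range (L.dualMap.comp e) = LinearMap.range L.dualMap :=
    LinearMap.range_comp_of_range_eq_top _ (LinearMap.range_eq_top.2 hsurj)
  have r2 : Module.finrank ℂ (LinearMap.range (e.comp M)) = Module.finrank ℂ (LinearMap.range M) := by
    rw [LinearMap.range_comp]
    exact (Submodule.equivMapOfInjective e hinj _).finrank_eq.symm
  have r3 := LinearMap.finrank_range_dualMap_eq_finrank_range L
  rw [← r1, hc, r2] at r3
  have a := LinearMap.finrank_range_add_finrank_ker L
  have b := LinearMap.finrank_range_add_finrank_ker M
  omega

lemma main_full (Hm : Matrix ι ι ℂ) (hH : Hm.IsHermitian) {m : ℕ} (Lk : Fin m → Matrix ι ι ℂ)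
    (Ld : Matrix ι ι ℂ →ₗ[ℂ] Matrix ι ι ℂ) (hadj : IsHSAdjoint (lindbladMap Hm Lk) Ld)
    (s : Matrix ι ι ℂ) (hs : s.PosDef) (hfix : lindbladMap Hm Lk (s * s) = 0)
    (X : Matrix ι ι ℂ) :
    lindbladMap Hm Lk X = 0 ↔ ∃ Y, Ld Y = 0 ∧ X = s * Y * s := by
  have hG := effG_add Hm hH Lk
  have hL := lindblad_eq Hm hH Lk
  have hLd := adj_eq Hm hH Lk Ld hadj
  set G := effG Hm Lk with hGdef
  have hunit := hs.isUnit
  have hdet : IsUnit s.det := (Matrix.isUnit_iff_isUnit_det s).1 hunit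
  have hρ : (s * s).PosDef := by
    have := Matrix.PosDef.conjTranspose_mul_self s
      (Matrix.mulVec_injective_of_isUnit hunit)
    rwa [hs.1.eq] at this
  have hstar : ∀ Y, Ld Yᴴ = (Ld Y)ᴴ := by
    intro Y
    simp only [hLd, Matrix.conjTranspose_add, Matrix.conjTranspose_mul,
      Matrix.conjTranspose_conjTranspose, Matrix.conjTranspose_sum, Matrix.mul_assoc]
    rw [add_comm (Gᴴ * Yᴴ)]
  have hcomm : ∀ Y, Ld Y = 0 → ∀ k, Y * Lk k = Lk k * Y := by
    intro Y hY k
    have hY' : Ld Yᴴ = 0 := by rw [hstar, hY, Matrix.conjTranspose_zero]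
    rw [hLd] at hY hY'
    rw [hL] at hfix
    exact comm_of_ker G Lk hG (s * s) hρ s hs rfl hfix Y hY hY' k
  have hcomm' : ∀ Y, Ld Y = 0 → ∀ k, Y * (Lk k)ᴴ = (Lk k)ᴴ * Y := by
    intro Y hY k
    have hY' : Ld Yᴴ = 0 := by rw [hstar, hY, Matrix.conjTranspose_zero]
    have := congrArg Matrix.conjTranspose (hcomm _ hY' k)
    simpa [Matrix.conjTranspose_mul] using this.symm
  have hcG : ∀ Y, Ld Y = 0 → Y * G = G * Y := by
    intro Y hY
    have h1 := hcomm Y hY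
    have h2 := hLd Y
    have h3 : ∑ k, (Lk k)ᴴ * Y * Lk k = (∑ k, (Lk k)ᴴ * Lk k) * Y := by
      rw [Finset.sum_mul]
      refine Finset.sum_congr rfl fun k _ => ?_
      rw [Matrix.mul_assoc, h1 k, Matrix.mul_assoc]
    have h4 : ∑ k, (Lk k)ᴴ * Lk k = -(G + Gᴴ) := by rw [hG, neg_neg]
    rw [hY, h3, h4] at h2
    rw [← sub_eq_zero, h2]
    noncomm_ring
  have hcG' : ∀ Y, Ld Y = 0 → Y * Gᴴ = Gᴴ * Y := by
    intro Y hY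
    have hY' : Ld Yᴴ = 0 := by rw [hstar, hY, Matrix.conjTranspose_zero]
    have := congrArg Matrix.conjTranspose (hcG _ hY')
    simpa [Matrix.conjTranspose_mul] using this.symm
  have hright : ∀ Y, Ld Y = 0 → lindbladMap Hm Lk ((s * s) * Y) = 0 := by
    intro Y hY
    have : lindbladMap Hm Lk ((s * s) * Y) = lindbladMap Hm Lk (s * s) * Y := by
      rw [hL, hL, Matrix.add_mul, Matrix.add_mul, Finset.sum_mul]
      congr 1
      · rw [Matrix.mul_assoc (s * s), hcG' Y hY]; noncomm_ring
      · refine Finset.sum_congr rfl fun k _ => ?_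
        rw [Matrix.mul_assoc (Lk k * (s * s)) (Lk k)ᴴ, ← hcomm' Y hY k]; noncomm_ring
    rw [this, hfix, Matrix.zero_mul]
  have hleft : ∀ Y, Ld Y = 0 → lindbladMap Hm Lk (Y * (s * s)) = 0 := by
    intro Y hY
    have : lindbladMap Hm Lk (Y * (s * s)) = Y * lindbladMap Hm Lk (s * s) := by
      rw [hL, hL, Matrix.mul_add, Matrix.mul_add, Finset.mul_sum]
      congr 1
      · rw [← Matrix.mul_assoc G, ← hcG Y hY]; noncomm_ring
      · refine Finset.sum_congr rfl fun k _ => ?_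
        rw [← Matrix.mul_assoc (Lk k), ← hcomm Y hY k]; noncomm_ring
    rw [this, hfix, Matrix.mul_zero]
  have hfr : Module.finrank ℂ (LinearMap.ker (lindbladMap Hm Lk)) =
      Module.finrank ℂ (LinearMap.ker Ld) := by
    apply finrank_ker_adj
    intro A B
    have := hadj Aᴴ B
    rwa [hstar, Matrix.conjTranspose_conjTranspose, Matrix.conjTranspose_conjTranspose] at this
  have hsi : s * s⁻¹ = 1 := Matrix.mul_nonsing_inv _ hdet
  have his : s⁻¹ * s = 1 := Matrix.nonsing_inv_mul _ hdet
  have mapR : (LinearMap.ker Ld).map (LinearMap.mulLeft ℂ (s * s)) =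
      LinearMap.ker (lindbladMap Hm Lk) := by
    apply Submodule.eq_of_le_of_finrank_eq
    · rintro _ ⟨Y, hY, rfl⟩
      exact hright Y hY
    · rw [hfr]
      refine (Submodule.equivMapOfInjective _ ?_ _).finrank_eq.symm
      intro a b hab
      exact (hunit.mul hunit).mul_left_cancel hab
  have mapL : (LinearMap.ker Ld).map (LinearMap.mulRight ℂ (s * s)) =
      LinearMap.ker (lindbladMap Hm Lk) := by
    apply Submodule.eq_of_le_of_finrank_eq
    · rintro _ ⟨Y, hY, rfl⟩
      exact hleft Y hY
    · rw [hfr]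
      refine (Submodule.equivMapOfInjective _ ?_ _).finrank_eq.symm
      intro a b hab
      exact (hunit.mul hunit).mul_right_cancel hab
  have hinv : ∀ Y ∈ LinearMap.ker Ld, s * Y * s⁻¹ ∈ LinearMap.ker Ld := by
    apply sqrt_invariant _ s hs
    intro Y hY
    have h1 : (s * s) * Y ∈ LinearMap.ker (lindbladMap Hm Lk) := hright Y hY
    rw [← mapL] at h1
    obtain ⟨Z, hZ, hZY⟩ := h1
    have hZY' : Z * (s * s) = (s * s) * Y := hZY
    rw [← hZY']
    have : Z * (s * s) * (s⁻¹ * s⁻¹) = Z := by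
      calc _ = Z * (s * (s * s⁻¹) * s⁻¹) := by noncomm_ring
        _ = Z := by rw [hsi, Matrix.mul_one, hsi, Matrix.mul_one]
    rw [this]; exact hZ
  constructor
  · intro hX
    have h1 : X ∈ LinearMap.ker (lindbladMap Hm Lk) := hX
    rw [← mapR] at h1
    obtain ⟨Z, hZ, hZY⟩ := h1
    refine ⟨s * Z * s⁻¹, hinv Z hZ, ?_⟩
    have hZY' : (s * s) * Z = X := hZY
    calc X = s * s * Z * 1 := by rw [hZY', Matrix.mul_one]
      _ = s * s * Z * (s⁻¹ * s) := by rw [his]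
      _ = _ := by noncomm_ring
  · rintro ⟨Y, hY, rfl⟩
    have h1 := hleft _ (hinv Y hY)
    have : s * Y * s⁻¹ * (s * s) = s * Y * s := by
      calc _ = s * Y * (s⁻¹ * s) * s := by noncomm_ring
        _ = _ := by rw [his, Matrix.mul_one]
    rwa [this] at h1

lemma msqrt_spec (ρ : Matrix ι ι ℂ) (hρ : ρ.PosSemidef) :
    (msqrt ρ).PosSemidef ∧ msqrt ρ * msqrt ρ = ρ := by
  have h : ∃ B : Matrix ι ι ℂ, B.PosSemidef ∧ B * B = ρ := by
    open scoped MatrixOrder in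
    exact ⟨CFC.sqrt ρ, (Matrix.nonneg_iff_posSemidef).1 (CFC.sqrt_nonneg ρ),
      CFC.sqrt_mul_sqrt_self ρ (Matrix.nonneg_iff_posSemidef.2 hρ)⟩
  rw [msqrt, dif_pos h]
  exact h.choose_spec

/-- A projection fixing the range of a matrix. -/
lemma proj_mul_of_range_le {κ : Type*} [Fintype κ] [DecidableEq κ] (V : Matrix ι κ ℂ)
    (hiso : Vᴴ * V = 1) (X : Matrix ι ι ℂ)
    (h : LinearMap.range X.mulVecLin ≤ LinearMap.range V.mulVecLin) : V * Vᴴ * X = X := by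
  apply Matrix.toLin'.injective
  ext1 i
  apply LinearMap.ext
  intro c
  simp only [LinearMap.comp_apply, Matrix.toLin'_apply]
  generalize (LinearMap.single ℂ (fun _ => ℂ) i) c = v
  obtain ⟨w, hw⟩ := h ⟨v, rfl⟩
  simp only [Matrix.mulVecLin_apply] at hw
  rw [← Matrix.mulVec_mulVec, ← hw, Matrix.mulVec_mulVec, Matrix.mul_assoc, hiso, Matrix.mul_one]

lemma exists_factor {κ : Type*} [Fintype κ] [DecidableEq κ] (V : Matrix ι κ ℂ)
    (X : Matrix ι ι ℂ)
    (h : LinearMap.range V.mulVecLin ≤ LinearMap.range X.mulVecLin) :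
    ∃ W : Matrix ι κ ℂ, V = X * W := by
  have h1 : ∀ j : κ, ∃ w : ι → ℂ, X *ᵥ w = V *ᵥ (Pi.single j 1) := fun j => by
    obtain ⟨w, hw⟩ := h ⟨Pi.single j 1, rfl⟩
    exact ⟨w, hw⟩
  choose w hw using h1
  refine ⟨Matrix.of fun i j => w j i, ?_⟩
  ext i j
  have := congrFun (hw j) i
  rw [Matrix.mulVec_single_one] at this
  exact this.symm

end Helpers

/-! ### Statement 2 -/

theorem stmt2
    {ι : Type*} [Fintype ι] [DecidableEq ι]
    (Hm : Matrix ι ι ℂ) (hHm : Hm.IsHermitian) {m : ℕ} (Lk : Fin m → Matrix ι ι ℂ)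
    (ρ : Matrix ι ι ℂ) (hρ : IsDensity ρ)
    (hρfix : lindbladMap Hm Lk ρ = 0)
    (hmax : msupp ρ = suppSet (LinearMap.ker (lindbladMap Hm Lk) : Set (Matrix ι ι ℂ)))
    {κ : Type*} [Fintype κ] [DecidableEq κ]
    (V : Matrix ι κ ℂ) (hiso : Vᴴ * V = 1)
    (hrange : LinearMap.range V.mulVecLin = msupp ρ)
    (Ltd : Matrix κ κ ℂ →ₗ[ℂ] Matrix κ κ ℂ)
    (hadj : IsHSAdjoint (lindbladMap (Vᴴ * Hm * V) fun k => Vᴴ * Lk k * V) Ltd) :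
    (LinearMap.ker (lindbladMap Hm Lk) : Set (Matrix ι ι ℂ)) =
      {X | ∃ Y ∈ LinearMap.ker Ltd, X = msqrt ρ * (V * Y * Vᴴ) * msqrt ρ} := by
  have hP := hρ.1
  have hρH : ρᴴ = ρ := hP.1.eq
  obtain ⟨hs0, hss⟩ := msqrt_spec ρ hP
  set s0 := msqrt ρ with hs0def
  have hs0H : s0ᴴ = s0 := hs0.1.eq
  have hrange' : LinearMap.range V.mulVecLin = LinearMap.range ρ.mulVecLin := by
    rw [hrange, msupp, hρH]
  have hPρ : V * Vᴴ * ρ = ρ := proj_mul_of_range_le V hiso ρ hrange'.ge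
  obtain ⟨W, hW⟩ := exists_factor V ρ hrange'.le
  have hPH : (V * Vᴴ)ᴴ = V * Vᴴ := by simp [Matrix.conjTranspose_mul]
  have hρP : ρ * (V * Vᴴ) = ρ := by
    have := congrArg Matrix.conjTranspose hPρ
    rwa [Matrix.conjTranspose_mul, hPH, hρH] at this
  -- the square root lives on the support
  have hsQ : s0 * (1 - V * Vᴴ) = 0 := by
    apply Matrix.conjTranspose_mul_self_eq_zero.1
    rw [Matrix.conjTranspose_mul, hs0H, Matrix.mul_assoc, ← Matrix.mul_assoc s0, hss,
      Matrix.mul_sub ρ, hρP]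
    simp
  have hsP : s0 * (V * Vᴴ) = s0 := by
    rw [Matrix.mul_sub, Matrix.mul_one, sub_eq_zero] at hsQ
    exact hsQ.symm
  have hPs : V * Vᴴ * s0 = s0 := by
    have := congrArg Matrix.conjTranspose hsP
    rwa [Matrix.conjTranspose_mul, hPH, hs0H] at this
  set s : Matrix κ κ ℂ := Vᴴ * s0 * V with hsdef
  have hs0s : s0 = V * s * Vᴴ := by
    calc s0 = V * Vᴴ * (s0 * (V * Vᴴ)) := by rw [hsP, hPs]
      _ = _ := by rw [hsdef]; simp only [Matrix.mul_assoc]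
  have hsVs : s * s = Vᴴ * ρ * V := by
    calc s * s = Vᴴ * (s0 * (V * Vᴴ) * s0) * V := by rw [hsdef]; simp only [Matrix.mul_assoc]
      _ = _ := by rw [hsP, hss]
  have hspsd : s.PosSemidef := hs0.conjTranspose_mul_mul_same V
  have hsunit : IsUnit s := by
    apply (Matrix.isUnit_iff_isUnit_det s).2
    have h1 : s * (s * (Vᴴ * W)) = 1 := by
      calc s * (s * (Vᴴ * W)) = Vᴴ * (ρ * (V * Vᴴ)) * W := by
            rw [← Matrix.mul_assoc, hsVs]; simp only [Matrix.mul_assoc]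
        _ = 1 := by rw [hρP, Matrix.mul_assoc, ← hW, hiso]
    exact Matrix.isUnit_det_of_right_inverse h1
  have hspd : s.PosDef := (Matrix.PosSemidef.posDef_iff_isUnit hspsd).2 hsunit
  -- invariance of the support
  have hL := lindblad_eq Hm hHm Lk
  have hfix := hρfix
  rw [hL] at hfix
  set G := effG Hm Lk with hGdef
  set Q : Matrix ι ι ℂ := 1 - V * Vᴴ with hQdef
  have hQH : Qᴴ = Q := by rw [hQdef, Matrix.conjTranspose_sub, hPH, Matrix.conjTranspose_one]
  have hQρ : Q * ρ = 0 := by rw [hQdef, Matrix.sub_mul, hPρ, Matrix.one_mul, sub_self]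
  have hρQ : ρ * Q = 0 := by rw [hQdef, Matrix.mul_sub, hρP, Matrix.mul_one, sub_self]
  have hQLs : ∀ k, Q * Lk k * s0 = 0 := by
    apply sum_mul_conj_zero
    have h1 : Q * (G * ρ + ρ * Gᴴ + ∑ k, Lk k * ρ * (Lk k)ᴴ) * Q = 0 := by
      rw [hfix]; simp
    have h2 : Q * (G * ρ + ρ * Gᴴ + ∑ k, Lk k * ρ * (Lk k)ᴴ) * Q
        = Q * G * (ρ * Q) + (Q * ρ) * Gᴴ * Q + Q * (∑ k, Lk k * ρ * (Lk k)ᴴ) * Q := by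
      noncomm_ring
    rw [h2, hρQ, hQρ] at h1
    simp only [Matrix.mul_zero, Matrix.zero_mul, zero_add, Finset.mul_sum, Finset.sum_mul] at h1
    rw [← h1]
    refine Finset.sum_congr rfl fun k _ => ?_
    rw [Matrix.conjTranspose_mul, Matrix.conjTranspose_mul, hs0H, hQH, ← hss]
    simp only [Matrix.mul_assoc]
  have hQLρ : ∀ k, Q * Lk k * ρ = 0 := fun k => by
    rw [← hss, ← Matrix.mul_assoc, hQLs, Matrix.zero_mul]
  have hQGρ : Q * G * ρ = 0 := by
    have h1 : Q * (G * ρ + ρ * Gᴴ + ∑ k, Lk k * ρ * (Lk k)ᴴ) = 0 := by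
      rw [hfix]; simp
    have h3 : ∑ k, Q * (Lk k * ρ * (Lk k)ᴴ) = 0 := by
      refine Finset.sum_eq_zero fun k _ => ?_
      rw [← Matrix.mul_assoc, ← Matrix.mul_assoc, hQLρ, Matrix.zero_mul]
    rw [Matrix.mul_add, Matrix.mul_add, Finset.mul_sum, h3, ← Matrix.mul_assoc Q ρ, hQρ,
      Matrix.zero_mul, add_zero, add_zero, ← Matrix.mul_assoc] at h1
    exact h1
  have hinvV : ∀ A : Matrix ι ι ℂ, Q * A * ρ = 0 → V * (Vᴴ * A * V) = A * V := by
    intro A hA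
    have h1 : Q * A * V = 0 := by rw [hW, ← Matrix.mul_assoc, hA, Matrix.zero_mul]
    rw [hQdef, Matrix.sub_mul, Matrix.sub_mul, Matrix.one_mul, sub_eq_zero] at h1
    rw [h1]; simp only [Matrix.mul_assoc]
  have hLV := fun k => hinvV (Lk k) (hQLρ k)
  have hGV := hinvV G hQGρ
  -- the reduced generator
  have hHt : (Vᴴ * Hm * V).IsHermitian := Matrix.isHermitian_conjTranspose_mul_mul V hHm
  have hLt := lindblad_eq (Vᴴ * Hm * V) hHt (fun k => Vᴴ * Lk k * V)
  have hGt : effG (Vᴴ * Hm * V) (fun k => Vᴴ * Lk k * V) = Vᴴ * G * V := by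
    have h1 : ∑ k, (Vᴴ * Lk k * V)ᴴ * (Vᴴ * Lk k * V) = Vᴴ * (∑ k, (Lk k)ᴴ * Lk k) * V := by
      rw [Matrix.mul_sum, Matrix.sum_mul]
      refine Finset.sum_congr rfl fun k _ => ?_
      calc _ = Vᴴ * (Lk k)ᴴ * (V * (Vᴴ * Lk k * V)) := by
            simp only [Matrix.conjTranspose_mul, Matrix.conjTranspose_conjTranspose,
              Matrix.mul_assoc]
        _ = _ := by rw [hLV]; simp only [Matrix.mul_assoc]
    rw [hGdef, effG, effG, h1]
    simp only [Matrix.mul_sub, Matrix.sub_mul, Matrix.mul_smul, Matrix.smul_mul]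
  rw [hGt] at hLt
  have hinter : ∀ Y : Matrix κ κ ℂ, lindbladMap Hm Lk (V * Y * Vᴴ) =
      V * lindbladMap (Vᴴ * Hm * V) (fun k => Vᴴ * Lk k * V) Y * Vᴴ := by
    intro Y
    have conjform : ∀ A : Matrix ι ι ℂ, V * (Vᴴ * A * V) = A * V →
        (Vᴴ * A * V)ᴴ * Vᴴ = Vᴴ * Aᴴ := by
      intro A hA
      rw [← Matrix.conjTranspose_mul, hA, Matrix.conjTranspose_mul]
    rw [hL, hLt, Matrix.mul_add, Matrix.mul_add, Matrix.add_mul, Matrix.add_mul,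
      Matrix.mul_sum, Matrix.sum_mul]
    congr 1
    · congr 1
      · rw [← Matrix.mul_assoc V (Vᴴ * G * V), hGV]; simp only [Matrix.mul_assoc]
      · rw [Matrix.mul_assoc V (Y * _), Matrix.mul_assoc Y, conjform G hGV]
        simp only [Matrix.mul_assoc]
    · refine Finset.sum_congr rfl fun k _ => ?_
      calc Lk k * (V * Y * Vᴴ) * (Lk k)ᴴ = (Lk k * V) * Y * (Vᴴ * (Lk k)ᴴ) := by
            simp only [Matrix.mul_assoc]
        _ = (V * (Vᴴ * Lk k * V)) * Y * ((Vᴴ * Lk k * V)ᴴ * Vᴴ) := by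
            rw [hLV, conjform _ (hLV k)]
        _ = _ := by simp only [Matrix.mul_assoc]
  have hVinj : ∀ Z : Matrix κ κ ℂ, V * Z * Vᴴ = 0 → Z = 0 := by
    intro Z hZ
    calc Z = (Vᴴ * V) * Z * (Vᴴ * V) := by rw [hiso, Matrix.one_mul, Matrix.mul_one]
      _ = Vᴴ * (V * Z * Vᴴ) * V := by simp only [Matrix.mul_assoc]
      _ = 0 := by rw [hZ]; simp
  have hfixt : lindbladMap (Vᴴ * Hm * V) (fun k => Vᴴ * Lk k * V) (s * s) = 0 := by
    apply hVinj
    rw [← hinter, hsVs]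
    have : V * (Vᴴ * ρ * V) * Vᴴ = ρ := by
      calc _ = V * Vᴴ * (ρ * (V * Vᴴ)) := by simp only [Matrix.mul_assoc]
        _ = ρ := by rw [hρP, hPρ]
    rw [this, hρfix]
  have hmain := main_full (Vᴴ * Hm * V) hHt (fun k => Vᴴ * Lk k * V) Ltd hadj s hspd hfixt
  have hform : ∀ Y : Matrix κ κ ℂ, s0 * (V * Y * Vᴴ) * s0 = V * (s * Y * s) * Vᴴ := by
    intro Y
    calc _ = (V * s * Vᴴ) * (V * Y * Vᴴ) * (V * s * Vᴴ) := by rw [← hs0s]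
      _ = V * s * (Vᴴ * V) * Y * (Vᴴ * V) * s * Vᴴ := by simp only [Matrix.mul_assoc]
      _ = _ := by rw [hiso]; simp only [Matrix.mul_assoc, Matrix.one_mul]
  -- kernel elements are supported on the range of V
  have hsupp : ∀ X, lindbladMap Hm Lk X = 0 → V * Vᴴ * Xᴴ = Xᴴ := by
    intro X hX
    apply proj_mul_of_range_le V hiso
    rw [hrange, hmax]
    exact le_iSup₂_of_le (f := fun O (_ : O ∈ (LinearMap.ker (lindbladMap Hm Lk) :
      Set (Matrix ι ι ℂ))) => msupp O) X hX le_rfl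
  have hstar : ∀ X, lindbladMap Hm Lk X = 0 → lindbladMap Hm Lk Xᴴ = 0 := by
    intro X hX
    have : lindbladMap Hm Lk Xᴴ = (lindbladMap Hm Lk X)ᴴ := by
      simp only [hL, Matrix.conjTranspose_add, Matrix.conjTranspose_mul,
        Matrix.conjTranspose_conjTranspose, Matrix.conjTranspose_sum, Matrix.mul_assoc]
      rw [add_comm (G * Xᴴ)]
    rw [this, hX, Matrix.conjTranspose_zero]
  ext X
  simp only [SetLike.mem_coe, LinearMap.mem_ker, Set.mem_setOf_eq]
  constructor
  · intro hX
    have h1 : X * (V * Vᴴ) = X := by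
      have := congrArg Matrix.conjTranspose (hsupp X hX)
      rwa [Matrix.conjTranspose_mul, hPH, Matrix.conjTranspose_conjTranspose] at this
    have h2 : V * Vᴴ * X = X := by
      have := hsupp _ (hstar X hX)
      rwa [Matrix.conjTranspose_conjTranspose] at this
    have h3 : X = V * (Vᴴ * X * V) * Vᴴ := by
      calc X = V * Vᴴ * (X * (V * Vᴴ)) := by rw [h1, h2]
        _ = _ := by simp only [Matrix.mul_assoc]
    have h4 : lindbladMap (Vᴴ * Hm * V) (fun k => Vᴴ * Lk k * V) (Vᴴ * X * V) = 0 := by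
      apply hVinj
      rw [← hinter, ← h3, hX]
    obtain ⟨Y, hY, hXY⟩ := (hmain _).1 h4
    exact ⟨Y, hY, by rw [hform, ← hXY]; exact h3⟩
  · rintro ⟨Y, hY, rfl⟩
    rw [hform, hinter, (hmain _).2 ⟨Y, hY, rfl⟩]
    simp

end QDS
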